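/- Let d and p be positive integers. There exists a constant c depending only on d and p such that for every integer K ≥ 2 the following holds. Consider the class of binary functions F = {f_s}, indexed by axis-aligned line segments s in ℝ^p, on the domain of K-tuples γ = (γ_1,…,γ_K) of algebraic hypersurfaces of degree at most d in ℝ^p, where f_s(γ) = 1 if some γ_i intersects s and f_s(γ) = 0 otherwise. Then the VC dimension of F is at most c·log K; i.e., if m tuples γ^(1),…,γ^(m) are such that for every b ∈ {0,1}^m there is an axis-aligned segment s with f_s(γ^(j)) = b_j for all j, then m ≤ c·log K. -/

import Mathlib

/-- An algebraic hypersurface of degree at most `d` in `ℝ^p`: the zero set of a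
nonzero real polynomial in `p` variables of total degree at most `d`. -/
def IsAlgHypersurface (d p : ℕ) (H : Set (Fin p → ℝ)) : Prop :=
  ∃ f : MvPolynomial (Fin p) ℝ, f ≠ 0 ∧ f.totalDegree ≤ d ∧
    H = {x : Fin p → ℝ | MvPolynomial.eval x f = 0}

/-- An axis-aligned line segment in `ℝ^p`. -/
def IsAxisSegment (p : ℕ) (s : Set (Fin p → ℝ)) : Prop :=
  ∃ (x : Fin p → ℝ) (i : Fin p) (ℓ : ℝ), 0 ≤ ℓ ∧
    s = {y : Fin p → ℝ | ∃ t ∈ Set.Icc (0 : ℝ) ℓ, y = x + t • (Pi.single i 1 : Fin p → ℝ)}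

/-!
Parametrizing a segment by rational functions turns "the hypersurface meets the segment" into "a
real polynomial, whose coefficients are polynomials in the endpoints of the segment and the
coefficients of the hypersurface, has a real root". The number of distinct roots of `P` is the
Cauchy index of `P' / P`, which a division-free Euclidean algorithm computes from the signs of
finitely many polynomials in those data, their number and degrees depending only on `d` and `p`.

Such a sign is the sign of a linear functional, given by the monomials in the endpoints, applied to
a vector that depends only on the hypersurface. Half-spaces in `ℝ ^ B` have VC dimension at most
`B`, so the Sauer-Shelah lemma bounds the number of labelings of `m` tuples of `K` hypersurfaces by
`(D * (m * K) + 1) ^ B`. If all `2 ^ m` labelings occur, then `m = O(log K)`.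
-/

section CauchyIndex

open Polynomial

section RootMultiplicity

variable {R : Type*} [CommRing R] {g h : R[X]} {x : R}

theorem exists_eq_X_sub_C_pow_mul (hg : g ≠ 0) (x : R) :
    ∃ n h, g = (X - C x) ^ n * h ∧ h.eval x ≠ 0 := by
  obtain ⟨h, hgh, hdvd⟩ := exists_eq_pow_rootMultiplicity_mul_and_not_dvd g hg x
  exact ⟨_, h, hgh, mt dvd_iff_isRoot.2 hdvd⟩

theorem rootMultiplicity_X_sub_C_pow_mul (n : ℕ) (hh : h.eval x ≠ 0) :
    rootMultiplicity x ((X - C x) ^ n * h) = n := by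
  have h_ne : h ≠ 0 := by rintro rfl; simp at hh
  rw [mul_comm, rootMultiplicity_mul_X_sub_C_pow h_ne, rootMultiplicity_eq_zero hh, zero_add]

theorem X_sub_C_pow_dvd_X_sub_C_pow_mul_iff {k n : ℕ} (hh : h.eval x ≠ 0) :
    (X - C x) ^ k ∣ (X - C x) ^ n * h ↔ k ≤ n := by
  have h_ne : h ≠ 0 := by rintro rfl; simp at hh
  rw [← le_rootMultiplicity_iff (((monic_X_sub_C x).pow n).mul_right_ne_zero h_ne),
    rootMultiplicity_X_sub_C_pow_mul n hh]

end RootMultiplicity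

/-- Half of the jump of the sign of the real polynomial `g` across `x`: it is nonzero exactly at
the roots of odd multiplicity, where it is the sign of `g` immediately to the right of `x`. -/
noncomputable def signJump (g : ℝ[X]) (x : ℝ) : ℤ :=
  if Odd (g.rootMultiplicity x) then
    SignType.sign ((g /ₘ (X - C x) ^ g.rootMultiplicity x).eval x) else 0

theorem signJump_X_sub_C_pow_mul (n : ℕ) {h : ℝ[X]} {x : ℝ} (hh : h.eval x ≠ 0) :
    signJump ((X - C x) ^ n * h) x = if Odd n then (SignType.sign (h.eval x) : ℤ) else 0 := by
  rw [signJump, rootMultiplicity_X_sub_C_pow_mul n hh,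
    mul_divByMonic_cancel_left _ ((monic_X_sub_C x).pow n)]

theorem signJump_zero (x : ℝ) : signJump 0 x = 0 := by simp [signJump]

theorem signJump_mul_of_eval_ne_zero {u : ℝ[X]} {x : ℝ} (hu : u.eval x ≠ 0) (g : ℝ[X]) :
    signJump (u * g) x = SignType.sign (u.eval x) * signJump g x := by
  rcases eq_or_ne g 0 with rfl | hg
  · rw [mul_zero, signJump_zero, mul_zero]
  obtain ⟨n, h, rfl, hh⟩ := exists_eq_X_sub_C_pow_mul hg x
  have huh : (u * h).eval x ≠ 0 := by rw [eval_mul]; exact mul_ne_zero hu hh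
  rw [mul_left_comm, signJump_X_sub_C_pow_mul n huh, signJump_X_sub_C_pow_mul n hh, eval_mul,
    sign_mul, SignType.coe_mul, mul_ite, mul_zero]

theorem sign_eval_eq_sign_leadingCoeff {g : ℝ[X]} {x : ℝ} (hroots : ∀ y, g.IsRoot y → y < x) :
    SignType.sign (g.eval x) = SignType.sign g.leadingCoeff := by
  have hg : g.leadingCoeff ≠ 0 := fun h ↦
    lt_irrefl x (hroots x (by simp [leadingCoeff_eq_zero.1 h]))
  rcases hg.lt_or_gt with hneg | hpos
  · rw [sign_neg hneg, sign_neg (eval_lt_zero_of_roots_lt_of_leadingCoeff_nonpos hroots hneg.le)]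
  · rw [sign_pos hpos, sign_pos (zero_lt_eval_of_roots_lt_of_leadingCoeff_nonneg hroots hpos.le)]

theorem even_natDegree_of_forall_not_isRoot {g : ℝ[X]} (hroots : ∀ y, ¬ g.IsRoot y) :
    Even g.natDegree := by
  by_contra hodd
  have hright := sign_eval_eq_sign_leadingCoeff (g := g) (x := 0) fun y hy ↦ (hroots y hy).elim
  have hleft := sign_eval_eq_sign_leadingCoeff (g := g.comp (-X)) (x := 0) fun y hy ↦
    (hroots (-y) (by simpa using hy)).elim
  rw [comp_neg_X_leadingCoeff_eq, (Nat.not_even_iff_odd.1 hodd).neg_one_pow, neg_one_mul,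
    Left.sign_neg, eval_comp, eval_neg, eval_X, neg_zero, hright, SignType.self_eq_neg_iff,
    sign_eq_zero_iff, leadingCoeff_eq_zero] at hleft
  exact hroots 0 (by simp [hleft])

theorem sum_signJump (g : ℝ[X]) :
    ∑ x ∈ g.roots.toFinset, signJump g x =
      if Odd g.natDegree then (SignType.sign g.leadingCoeff : ℤ) else 0 := by
  induction hs : g.roots.toFinset using Finset.induction_on_max generalizing g with
  | empty =>
    rcases eq_or_ne g 0 with rfl | hg
    · simp
    rw [Finset.sum_empty, if_neg]
    refine Nat.not_odd_iff_even.2 (even_natDegree_of_forall_not_isRoot fun y hy ↦ ?_)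
    simpa [hs] using Multiset.mem_toFinset.2 ((mem_roots hg).2 hy)
  | insert r s hlt ih =>
    have hr : r ∈ g.roots := Multiset.mem_toFinset.1 (hs ▸ Finset.mem_insert_self r s)
    have hg : g ≠ 0 := ne_zero_of_mem_roots hr
    obtain ⟨v, h, rfl, hh⟩ := exists_eq_X_sub_C_pow_mul hg r
    have h_ne : h ≠ 0 := right_ne_zero_of_mul hg
    have hv : v ≠ 0 := by rintro rfl; exact hh (by simpa [h_ne] using hr)
    have hrs : r ∉ s := fun hmem ↦ lt_irrefl r (hlt r hmem)
    have hroots : h.roots.toFinset = s := by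
      rw [← Finset.erase_insert hrs, ← hs, roots_mul hg, roots_pow, roots_X_sub_C,
        Multiset.toFinset_add, Multiset.toFinset_nsmul _ _ hv, Multiset.toFinset_singleton,
        ← Finset.insert_eq, Finset.erase_insert (by simp [h_ne, hh])]
    have hsign : SignType.sign (h.eval r) = SignType.sign h.leadingCoeff :=
      sign_eval_eq_sign_leadingCoeff fun y hy ↦
        hlt y (hroots ▸ Multiset.mem_toFinset.2 ((mem_roots h_ne).2 hy))
    -- The factor `(X - r) ^ v` multiplies the jumps at all smaller roots by `(-1) ^ v`.
    have hleft : ∀ x ∈ s, signJump ((X - C r) ^ v * h) x = (-1) ^ v * signJump h x := by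
      intro x hx
      have hxr : x - r < 0 := sub_neg.2 (hlt x hx)
      rw [signJump_mul_of_eval_ne_zero (by simpa using pow_ne_zero v hxr.ne)]
      simp [sign_pow, sign_neg hxr]
    rw [Finset.sum_insert hrs, Finset.sum_congr rfl hleft, ← Finset.mul_sum, ih h hroots,
      signJump_X_sub_C_pow_mul v hh, hsign, (monic_X_sub_C r).pow v |>.natDegree_mul' h_ne,
      natDegree_pow, natDegree_X_sub_C, mul_one, leadingCoeff_monic_mul ((monic_X_sub_C r).pow v)]
    rcases Nat.even_or_odd v with hv | hv
    · simp [hv, Nat.not_odd_iff_even.2 hv, Nat.odd_add', hv.neg_one_pow]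
    · rcases Nat.even_or_odd h.natDegree with hn | hn
      · simp [hv, Nat.not_odd_iff_even.2 hn, hv.add_even hn, hv.neg_one_pow]
      · simp [hv, hn, Nat.not_odd_iff_even.2 (hv.add_odd hn), hv.neg_one_pow]

open Classical in
/-- The contribution of the point `x` to the Cauchy index of `Q / P`: half of the jump of the sign
of `Q / P` across `x` if `x` is a pole, and `0` otherwise. Since `P * Q` and `Q / P` have the same
sign, the jump is read off the polynomial `P * Q`. -/
noncomputable def cauchyIndexAt (Q P : ℝ[X]) (x : ℝ) : ℤ :=
  if (X - C x) ^ P.rootMultiplicity x ∣ Q then 0 else signJump (P * Q) x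

/-- The Cauchy index of the rational function `Q / P` over the real line: the number of poles where
it jumps from `-∞` to `+∞` minus the number of poles where it jumps from `+∞` to `-∞`.
It is `0` for `P = 0`. -/
noncomputable def cauchyIndex (Q P : ℝ[X]) : ℤ := ∑ x ∈ P.roots.toFinset, cauchyIndexAt Q P x

theorem cauchyIndex_zero_left (P : ℝ[X]) : cauchyIndex 0 P = 0 := by
  simp [cauchyIndex, cauchyIndexAt]

theorem cauchyIndex_zero_right (Q : ℝ[X]) : cauchyIndex Q 0 = 0 := by
  simp [cauchyIndex]

theorem cauchyIndexAt_C_mul (c : ℝ) (Q P : ℝ[X]) (x : ℝ) :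
    cauchyIndexAt (C c * Q) P x = SignType.sign c * cauchyIndexAt Q P x := by
  rcases eq_or_ne c 0 with rfl | hc
  · simp [cauchyIndexAt]
  have hdvd : (X - C x) ^ P.rootMultiplicity x ∣ C c * Q ↔ (X - C x) ^ P.rootMultiplicity x ∣ Q :=
    (isUnit_C.2 hc.isUnit).dvd_mul_left
  rw [cauchyIndexAt, cauchyIndexAt, mul_left_comm,
    signJump_mul_of_eval_ne_zero (by rwa [eval_C]), eval_C, mul_ite, mul_zero]
  classical exact if_congr hdvd rfl rfl

theorem cauchyIndexAt_add_mul (S Q P : ℝ[X]) (x : ℝ) :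
    cauchyIndexAt (Q + S * P) P x = cauchyIndexAt Q P x := by
  have hdvd : (X - C x) ^ P.rootMultiplicity x ∣ Q + S * P ↔
      (X - C x) ^ P.rootMultiplicity x ∣ Q :=
    dvd_add_left ((pow_rootMultiplicity_dvd P x).mul_left S)
  rw [cauchyIndexAt, cauchyIndexAt]
  by_cases hPQ : (X - C x) ^ P.rootMultiplicity x ∣ Q
  · rw [if_pos hPQ, if_pos (hdvd.2 hPQ)]
  rw [if_neg hPQ, if_neg (mt hdvd.1 hPQ)]
  rcases eq_or_ne P 0 with rfl | hP
  · simp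
  have hQ : Q ≠ 0 := by rintro rfl; exact hPQ (dvd_zero _)
  obtain ⟨b, p, rfl, hp⟩ := exists_eq_X_sub_C_pow_mul hP x
  obtain ⟨a, q, rfl, hq⟩ := exists_eq_X_sub_C_pow_mul hQ x
  rw [rootMultiplicity_X_sub_C_pow_mul b hp, X_sub_C_pow_dvd_X_sub_C_pow_mul_iff hq, not_le] at hPQ
  obtain ⟨k, rfl⟩ := Nat.exists_eq_add_of_lt hPQ
  have heval : (p * (q + S * ((X - C x) ^ (k + 1) * p))).eval x = (p * q).eval x := by simp
  have hpq : (p * q).eval x ≠ 0 := by simp [hp, hq]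
  calc signJump ((X - C x) ^ (a + k + 1) * p *
        ((X - C x) ^ a * q + S * ((X - C x) ^ (a + k + 1) * p))) x
      = signJump ((X - C x) ^ (a + k + 1 + a) * (p * (q + S * ((X - C x) ^ (k + 1) * p)))) x := by
        congr 1; ring
    _ = signJump ((X - C x) ^ (a + k + 1 + a) * (p * q)) x := by
        rw [signJump_X_sub_C_pow_mul _ (heval ▸ hpq), signJump_X_sub_C_pow_mul _ hpq, heval]
    _ = signJump ((X - C x) ^ (a + k + 1) * p * ((X - C x) ^ a * q)) x := by
        congr 1; ring

theorem cauchyIndex_C_mul_add_mul (c : ℝ) (S Q P : ℝ[X]) :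
    cauchyIndex (C c * Q + S * P) P = SignType.sign c * cauchyIndex Q P := by
  simp only [cauchyIndex, cauchyIndexAt_add_mul, cauchyIndexAt_C_mul, Finset.mul_sum]

theorem cauchyIndexAt_of_not_isRoot {P : ℝ[X]} {x : ℝ} (hx : ¬ P.IsRoot x) (Q : ℝ[X]) :
    cauchyIndexAt Q P x = 0 := by
  simp [cauchyIndexAt, rootMultiplicity_eq_zero hx]

theorem cauchyIndexAt_add_cauchyIndexAt_swap {P Q : ℝ[X]} (hP : P ≠ 0) (hQ : Q ≠ 0) (x : ℝ) :
    cauchyIndexAt Q P x + cauchyIndexAt P Q x = signJump (P * Q) x := by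
  obtain ⟨b, p, rfl, hp⟩ := exists_eq_X_sub_C_pow_mul hP x
  obtain ⟨a, q, rfl, hq⟩ := exists_eq_X_sub_C_pow_mul hQ x
  simp only [cauchyIndexAt, rootMultiplicity_X_sub_C_pow_mul, hp, hq, ne_eq, not_false_eq_true,
    X_sub_C_pow_dvd_X_sub_C_pow_mul_iff]
  rcases lt_trichotomy a b with hab | rfl | hba
  · rw [if_neg hab.not_ge, if_pos hab.le, add_zero]
  · have hpq : (p * q).eval x ≠ 0 := by simp [hp, hq]
    rw [if_pos le_rfl, if_pos le_rfl, add_zero, mul_mul_mul_comm, ← pow_add,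
      signJump_X_sub_C_pow_mul _ hpq, if_neg (by simp)]
  · rw [if_pos hba.le, if_neg hba.not_ge, zero_add, mul_comm]

theorem cauchyIndex_eq_sum_of_dvd {P A : ℝ[X]} (hA : A ≠ 0) (hPA : P ∣ A) (Q : ℝ[X]) :
    cauchyIndex Q P = ∑ x ∈ A.roots.toFinset, cauchyIndexAt Q P x := by
  have hP : P ≠ 0 := ne_zero_of_dvd_ne_zero hA hPA
  refine Finset.sum_subset (Multiset.toFinset_subset.2
    (Multiset.subset_of_le (roots.le_of_dvd hA hPA))) fun x _ hx ↦ ?_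
  exact cauchyIndexAt_of_not_isRoot (by simpa [hP] using hx) Q

theorem cauchyIndex_add_cauchyIndex_swap {P Q : ℝ[X]} (hP : P ≠ 0) (hQ : Q ≠ 0) :
    cauchyIndex Q P + cauchyIndex P Q =
      if Odd (P.natDegree + Q.natDegree) then
        (SignType.sign P.leadingCoeff * SignType.sign Q.leadingCoeff : ℤ) else 0 := by
  have hPQ : P * Q ≠ 0 := mul_ne_zero hP hQ
  rw [cauchyIndex_eq_sum_of_dvd hPQ (dvd_mul_right P Q),
    cauchyIndex_eq_sum_of_dvd hPQ (dvd_mul_left Q P), ← Finset.sum_add_distrib,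
    Finset.sum_congr rfl fun x _ ↦ cauchyIndexAt_add_cauchyIndexAt_swap hP hQ x, sum_signJump,
    natDegree_mul hP hQ, leadingCoeff_mul, sign_mul, SignType.coe_mul]

theorem cauchyIndexAt_derivative {P : ℝ[X]} {x : ℝ} (hP : P ≠ 0) (hx : P.IsRoot x) :
    cauchyIndexAt (derivative P) P x = 1 := by
  obtain ⟨b, p, rfl, hp⟩ := exists_eq_X_sub_C_pow_mul hP x
  obtain ⟨k, rfl⟩ : ∃ k, b = k + 1 :=
    Nat.exists_eq_succ_of_ne_zero (by rintro rfl; exact hp (by simpa using hx))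
  set q : ℝ[X] := C (k + 1 : ℝ) * p + (X - C x) * derivative p with hq
  have hderiv : derivative ((X - C x) ^ (k + 1) * p) = (X - C x) ^ k * q := by
    simp only [hq, derivative_mul, derivative_X_sub_C_pow, Nat.cast_add, Nat.cast_one,
      add_tsub_cancel_right]
    ring
  have hpos : 0 < (p * q).eval x := by
    have heval : (p * q).eval x = (k + 1) * (p.eval x * p.eval x) := by
      simp only [hq, eval_mul, eval_add, eval_C, eval_sub, eval_X, sub_self, zero_mul, add_zero]
      ring
    rw [heval]
    exact mul_pos k.cast_add_one_pos (mul_self_pos.2 hp)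
  have hqx : q.eval x ≠ 0 := fun h ↦ hpos.ne' (by simp [h])
  rw [cauchyIndexAt, hderiv, rootMultiplicity_X_sub_C_pow_mul _ hp,
    if_neg (by rw [X_sub_C_pow_dvd_X_sub_C_pow_mul_iff hqx]; lia), mul_mul_mul_comm, ← pow_add,
    signJump_X_sub_C_pow_mul _ hpos.ne', if_pos (by grind), sign_pos hpos, SignType.coe_one]

theorem cauchyIndex_derivative (P : ℝ[X]) :
    cauchyIndex (derivative P) P = P.roots.toFinset.card := by
  have hone : ∀ x ∈ P.roots.toFinset, cauchyIndexAt (derivative P) P x = 1 := fun x hx ↦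
    have hx := Multiset.mem_toFinset.1 hx
    cauchyIndexAt_derivative (ne_zero_of_mem_roots hx) (isRoot_of_mem_roots hx)
  simp [cauchyIndex, Finset.sum_congr rfl hone]

theorem exists_eval_eq_zero_iff_cauchyIndex (P : ℝ[X]) :
    (∃ x, P.eval x = 0) ↔ P = 0 ∨ cauchyIndex (derivative P) P ≠ 0 := by
  rcases eq_or_ne P 0 with rfl | hP
  · simp
  rw [cauchyIndex_derivative, Nat.cast_ne_zero, Finset.card_ne_zero]
  simp [Finset.Nonempty, hP]

end CauchyIndex

section SignDetermined

open Polynomial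

variable {R : Type*} [CommRing R] {α β δ : Type*}

theorem map_eraseLead_of_map_leadingCoeff_eq_zero {S : Type*} [Semiring S] {φ : R →+* S} {P : R[X]}
    (hP : φ P.leadingCoeff = 0) : P.eraseLead.map φ = P.map φ := by
  conv_rhs => rw [← P.eraseLead_add_C_mul_X_pow, Polynomial.map_add, Polynomial.map_mul, map_C, hP,
    C_0, zero_mul, add_zero]

theorem degree_cancelLeads_lt {P Q : R[X]} (hQ : Q ≠ 0) (hle : P.natDegree ≤ Q.natDegree) :
    (P.cancelLeads Q).degree < Q.degree := by
  rcases Q.natDegree.eq_zero_or_pos with hQ₀ | hpos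
  · obtain ⟨b, rfl⟩ := natDegree_eq_zero.1 hQ₀
    obtain ⟨a, rfl⟩ := natDegree_eq_zero.1 (Nat.le_zero.1 (hQ₀ ▸ hle))
    have hcancel : (C a).cancelLeads (C b) = 0 := by simp [cancelLeads, mul_comm (C a)]
    rwa [hcancel, degree_zero, bot_lt_iff_ne_bot, degree_ne_bot]
  · exact degree_lt_degree (natDegree_cancelLeads_lt_of_natDegree_le_natDegree hle hpos)

theorem cauchyIndex_map_cancelLeads (φ : R →+* ℝ) {P Q : R[X]} (hle : P.natDegree ≤ Q.natDegree) :
    cauchyIndex ((P.cancelLeads Q).map φ) (P.map φ) =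
      SignType.sign (φ P.leadingCoeff) * cauchyIndex (Q.map φ) (P.map φ) := by
  rw [← cauchyIndex_C_mul_add_mul (φ P.leadingCoeff)
    (-(C (φ Q.leadingCoeff) * X ^ (Q.natDegree - P.natDegree)))]
  simp only [cancelLeads, Nat.sub_eq_zero_of_le hle, pow_zero, mul_one, Polynomial.map_sub,
    Polynomial.map_mul, Polynomial.map_pow, map_C, map_X]
  congr 1
  ring

/-- A function of a ring homomorphism `R →+* ℝ` is sign determined if its value depends only on
the signs of the images of finitely many elements of `R`. For `R` a polynomial ring, a sign
determined property is one defined by finitely many polynomial sign conditions on a point. -/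
def SignDetermined (F : (R →+* ℝ) → α) : Prop :=
  ∃ G : Finset R, ∀ ⦃φ ψ : R →+* ℝ⦄,
    (∀ g ∈ G, SignType.sign (φ g) = SignType.sign (ψ g)) → F φ = F ψ

namespace SignDetermined

theorem const (c : α) : SignDetermined fun _ : R →+* ℝ ↦ c :=
  ⟨∅, fun _ _ _ ↦ rfl⟩

theorem sign (a : R) : SignDetermined fun φ : R →+* ℝ ↦ SignType.sign (φ a) :=
  ⟨{a}, fun _ _ h ↦ h a (Finset.mem_singleton_self a)⟩

theorem map₂ {F : (R →+* ℝ) → α} {H : (R →+* ℝ) → β} (hF : SignDetermined F)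
    (hH : SignDetermined H) (f : α → β → δ) : SignDetermined fun φ ↦ f (F φ) (H φ) := by
  classical
  obtain ⟨G₁, hG₁⟩ := hF
  obtain ⟨G₂, hG₂⟩ := hH
  refine ⟨G₁ ∪ G₂, fun φ ψ h ↦ ?_⟩
  beta_reduce
  rw [hG₁ fun g hg ↦ h g (Finset.mem_union_left G₂ hg),
    hG₂ fun g hg ↦ h g (Finset.mem_union_right G₁ hg)]

theorem ite_eq_zero (a : R) {F H : (R →+* ℝ) → α} (hF : SignDetermined F)
    (hH : SignDetermined H) : SignDetermined fun φ ↦ if φ a = 0 then F φ else H φ := by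
  simpa only [sign_eq_zero_iff] using
    (sign a).map₂ (hF.map₂ hH Prod.mk) fun s v ↦ if s = 0 then v.1 else v.2

theorem map_eq_zero (P : R[X]) : SignDetermined fun φ : R →+* ℝ ↦ P.map φ = 0 := by
  refine ⟨P.coeffs, fun φ ψ h ↦ ?_⟩
  have hcoeff : ∀ n, φ (P.coeff n) = 0 ↔ ψ (P.coeff n) = 0 := fun n ↦ by
    by_cases hn : P.coeff n = 0
    · simp [hn]
    · rw [← sign_eq_zero_iff, h _ (coeff_mem_coeffs hn), sign_eq_zero_iff]
  simp [Polynomial.ext_iff, hcoeff]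

theorem cauchyIndex_map_of_cancelLeads {P Q : R[X]} (hle : P.natDegree ≤ Q.natDegree)
    (hP : SignDetermined fun φ ↦ cauchyIndex (Q.map φ) (P.eraseLead.map φ))
    (hQ : SignDetermined fun φ ↦ cauchyIndex ((P.cancelLeads Q).map φ) (P.map φ)) :
    SignDetermined fun φ ↦ cauchyIndex (Q.map φ) (P.map φ) := by
  convert hP.ite_eq_zero P.leadingCoeff ((sign P.leadingCoeff).map₂ hQ fun s n ↦ s * n) with φ
  split_ifs with h
  · rw [map_eraseLead_of_map_leadingCoeff_eq_zero h]
  · rw [cauchyIndex_map_cancelLeads φ hle, ← mul_assoc, ← SignType.coe_mul, ← sign_mul,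
      sign_pos (mul_self_pos.2 h), SignType.coe_one, one_mul]

theorem cauchyIndex_map_of_swap {P Q : R[X]}
    (hP : SignDetermined fun φ ↦ cauchyIndex (Q.map φ) (P.eraseLead.map φ))
    (hQ : SignDetermined fun φ ↦ cauchyIndex (Q.eraseLead.map φ) (P.map φ))
    (hQP : SignDetermined fun φ ↦ cauchyIndex (P.map φ) (Q.map φ)) :
    SignDetermined fun φ ↦ cauchyIndex (Q.map φ) (P.map φ) := by
  have hsigns := (sign P.leadingCoeff).map₂ (sign Q.leadingCoeff) fun s t ↦
    if Odd (P.natDegree + Q.natDegree) then (s * t : ℤ) else 0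
  convert hP.ite_eq_zero P.leadingCoeff
    (hQ.ite_eq_zero Q.leadingCoeff (hsigns.map₂ hQP fun n k ↦ n - k)) with φ
  by_cases hP₀ : φ P.leadingCoeff = 0
  · rw [if_pos hP₀, map_eraseLead_of_map_leadingCoeff_eq_zero hP₀]
  by_cases hQ₀ : φ Q.leadingCoeff = 0
  · rw [if_neg hP₀, if_pos hQ₀, map_eraseLead_of_map_leadingCoeff_eq_zero hQ₀]
  have hPlead := leadingCoeff_map_of_leadingCoeff_ne_zero φ hP₀
  have hQlead := leadingCoeff_map_of_leadingCoeff_ne_zero φ hQ₀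
  rw [if_neg hP₀, if_neg hQ₀, eq_sub_iff_add_eq, cauchyIndex_add_cauchyIndex_swap
    (leadingCoeff_ne_zero.1 (hPlead ▸ hP₀)) (leadingCoeff_ne_zero.1 (hQlead ▸ hQ₀)), hPlead, hQlead,
    natDegree_map_of_leadingCoeff_ne_zero φ hP₀, natDegree_map_of_leadingCoeff_ne_zero φ hQ₀]

theorem cauchyIndex_map (P Q : R[X]) :
    SignDetermined fun φ ↦ cauchyIndex (Q.map φ) (P.map φ) := by
  induction hn : P.degree + Q.degree using WellFoundedLT.induction generalizing P Q with
  | ind n ih =>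
    subst hn
    rcases eq_or_ne P 0 with rfl | hP
    · simpa [cauchyIndex_zero_right] using SignDetermined.const (R := R) (0 : ℤ)
    rcases eq_or_ne Q 0 with rfl | hQ
    · simpa [cauchyIndex_zero_left] using SignDetermined.const (R := R) (0 : ℤ)
    have hP_degree := degree_ne_bot.2 hP
    have hQ_degree := degree_ne_bot.2 hQ
    have hP_erase := ih _ (WithBot.add_lt_add_right hQ_degree (degree_eraseLead_lt hP)) _ Q rfl
    rcases le_total P.natDegree Q.natDegree with hle | hle
    · exact cauchyIndex_map_of_cancelLeads hle hP_erase
        (ih _ (WithBot.add_lt_add_left hP_degree (degree_cancelLeads_lt hQ hle)) P _ rfl)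
    · have hQ_erase := WithBot.add_lt_add_left hP_degree (degree_eraseLead_lt hQ)
      have hP_cancel := WithBot.add_lt_add_right hQ_degree (degree_cancelLeads_lt hP hle)
      exact cauchyIndex_map_of_swap hP_erase (ih _ hQ_erase P _ rfl)
        (cauchyIndex_map_of_cancelLeads hle (ih _ (by rwa [add_comm] at hQ_erase) _ P rfl)
          (ih _ (by rwa [add_comm] at hP_cancel) Q _ rfl))

theorem exists_eval_map_eq_zero (P : R[X]) :
    SignDetermined fun φ : R →+* ℝ ↦ ∃ x, (P.map φ).eval x = 0 := by
  simpa only [exists_eval_eq_zero_iff_cauchyIndex, derivative_map] using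
    (map_eq_zero P).map₂ (cauchyIndex_map P (derivative P)) fun p n ↦ p ∨ n ≠ 0

end SignDetermined

end SignDetermined

theorem sum_choose_le_add_one_pow (n v : ℕ) : ∑ k ∈ Finset.Iic v, n.choose k ≤ (n + 1) ^ v := by
  rw [add_pow, Nat.range_succ_eq_Iic]
  refine Finset.sum_le_sum fun k hk ↦ ?_
  calc n.choose k ≤ n ^ k := Nat.choose_le_pow n k
    _ ≤ n ^ k * 1 ^ (v - k) * v.choose k := by
      rw [one_pow, mul_one]
      exact Nat.le_mul_of_pos_right _ (Nat.choose_pos (Finset.mem_Iic.1 hk))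

theorem card_le_add_one_pow_vcDim {τ : Type*} [DecidableEq τ] [Fintype τ] (𝒜 : Finset (Finset τ)) :
    𝒜.card ≤ (Fintype.card τ + 1) ^ 𝒜.vcDim :=
  calc 𝒜.card ≤ 𝒜.shatterer.card := Finset.card_le_card_shatterer 𝒜
    _ ≤ ∑ k ∈ Finset.Iic 𝒜.vcDim, (Fintype.card τ).choose k :=
      Finset.card_shatterer_le_sum_vcDim
    _ ≤ (Fintype.card τ + 1) ^ 𝒜.vcDim := sum_choose_le_add_one_pow _ _

section LinearSignPatterns

open Module

variable {𝕜 V τ : Type*} [Field 𝕜] [LinearOrder 𝕜] [IsStrictOrderedRing 𝕜] [AddCommGroup V]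
  [Module 𝕜 V]

section HalfSpaces

variable [DecidableEq τ] {L : τ → V} {𝒜 : Finset (Finset τ)}

theorem linearIndepOn_of_shatters (h𝒜 : ∀ A ∈ 𝒜, ∃ ℓ : V →ₗ[𝕜] 𝕜, ∀ i, i ∈ A ↔ 0 < ℓ (L i))
    {S : Finset τ} (hS : 𝒜.Shatters S) : LinearIndepOn 𝕜 L (S : Set τ) := by
  -- Apply to a relation with coefficients `a` the functional that is positive exactly where `a` is.
  have hnonpos : ∀ a : τ → 𝕜, ∑ i ∈ S, a i • L i = 0 → ∀ i ∈ S, a i ≤ 0 := by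
    intro a ha i hi
    obtain ⟨A, hA, hSA⟩ := hS (Finset.filter_subset (fun j ↦ 0 < a j) S)
    obtain ⟨ℓ, hℓ⟩ := h𝒜 A hA
    have hpattern : ∀ j ∈ S, 0 < a j ↔ 0 < ℓ (L j) := fun j hj ↦ by
      simpa [hj, hℓ, iff_comm] using Finset.ext_iff.1 hSA j
    have hterm : ∀ j ∈ S, 0 ≤ a j * ℓ (L j) := fun j hj ↦ by
      rcases lt_or_ge 0 (a j) with hj' | hj'
      · exact (mul_pos hj' ((hpattern j hj).1 hj')).le
      · exact mul_nonneg_of_nonpos_of_nonpos hj' (not_lt.1 (mt (hpattern j hj).2 hj'.not_gt))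
    have hsum : ∑ j ∈ S, a j * ℓ (L j) = 0 := by simpa using congrArg ℓ ha
    by_contra! hi'
    have hi_term := (Finset.sum_eq_zero_iff_of_nonneg hterm).1 hsum i hi
    exact (mul_pos hi' ((hpattern i hi).1 hi')).ne' hi_term
  refine linearIndepOn_finset_iff.2 fun a ha i hi ↦ (hnonpos a ha i hi).antisymm ?_
  simpa using hnonpos (-a) (by simp [ha]) i hi

theorem vcDim_le_finrank [FiniteDimensional 𝕜 V]
    (h𝒜 : ∀ A ∈ 𝒜, ∃ ℓ : V →ₗ[𝕜] 𝕜, ∀ i, i ∈ A ↔ 0 < ℓ (L i)) : 𝒜.vcDim ≤ finrank 𝕜 V :=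
  Finset.sup_le fun S hS ↦ by
    simpa using (linearIndepOn_of_shatters h𝒜 (Finset.mem_shatterer.1 hS)).fintype_card_le_finrank

end HalfSpaces

theorem card_le_of_injective_sign [FiniteDimensional 𝕜 V] {β : Type*} [Fintype τ] [Fintype β]
    (L : τ → V) {ℓ : β → V →ₗ[𝕜] 𝕜}
    (hinj : Function.Injective fun b i ↦ SignType.sign (ℓ b (L i))) :
    Fintype.card β ≤ (2 * Fintype.card τ + 1) ^ finrank 𝕜 V := by
  classical
  let L' : τ ⊕ τ → V := Sum.elim L (-L)
  let pos (b : β) : Finset (τ ⊕ τ) := {i | 0 < ℓ b (L' i)}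
  have hpos : Function.Injective pos := fun b b' h ↦ hinj <| funext fun i ↦ by
    have hl : 0 < ℓ b (L i) ↔ 0 < ℓ b' (L i) := by
      simpa [pos, L'] using Finset.ext_iff.1 h (.inl i)
    have hr : ℓ b (L i) < 0 ↔ ℓ b' (L i) < 0 := by
      simpa [pos, L'] using Finset.ext_iff.1 h (.inr i)
    simp only [sign_apply, hl, hr]
  have hvc : (Finset.univ.image pos).vcDim ≤ finrank 𝕜 V := by
    refine vcDim_le_finrank (L := L') fun A hA ↦ ?_
    obtain ⟨b, -, rfl⟩ := Finset.mem_image.1 hA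
    exact ⟨ℓ b, fun i ↦ by simp [pos]⟩
  calc Fintype.card β = (Finset.univ.image pos).card := by
        rw [Finset.card_image_of_injective _ hpos, Finset.card_univ]
    _ ≤ (Fintype.card (τ ⊕ τ) + 1) ^ (Finset.univ.image pos).vcDim := card_le_add_one_pow_vcDim _
    _ ≤ (Fintype.card (τ ⊕ τ) + 1) ^ finrank 𝕜 V := Nat.pow_le_pow_right (by lia) hvc
    _ = (2 * Fintype.card τ + 1) ^ finrank 𝕜 V := by rw [Fintype.card_sum, two_mul]

end LinearSignPatterns

section PolynomialSignPatterns

open MvPolynomial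

theorem SignDetermined.exists_card_le_pow {σ S α : Type*} [CommRing S]
    {F : (MvPolynomial σ S →+* ℝ) → α} (hF : SignDetermined F) :
    ∃ D B : ℕ, ∀ (ι β : Type*) [Fintype ι] [Fintype β] (χ : ι → S →+* ℝ) (y : β → σ → ℝ),
      Function.Injective (fun b i ↦ F (eval₂Hom (χ i) (y b))) →
        Fintype.card β ≤ (D * Fintype.card ι + 1) ^ B := by
  classical
  obtain ⟨G, hG⟩ := hF
  let M : Finset (σ →₀ ℕ) := G.biUnion support
  refine ⟨2 * G.card, M.card, fun ι β _ _ χ y hinj ↦ ?_⟩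
  let L (t : G × ι) (e : M) : ℝ := χ t.2 (coeff e t.1.1)
  let ℓ (b : β) : (M → ℝ) →ₗ[ℝ] ℝ :=
    Fintype.linearCombination ℝ fun e : M ↦ e.1.prod fun n k ↦ y b n ^ k
  have heval : ∀ b (t : G × ι), ℓ b (L t) = eval₂Hom (χ t.2) (y b) t.1.1 := fun b t ↦ by
    have hsub : t.1.1.support ⊆ M := Finset.subset_biUnion_of_mem support t.1.2
    rw [coe_eval₂Hom, eval₂_eq, Finset.sum_subset hsub fun e _ he ↦ by
      rw [notMem_support_iff.1 he, map_zero, zero_mul], ← Finset.sum_coe_sort M]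
    rfl
  have hsign : Function.Injective fun b t ↦ SignType.sign (ℓ b (L t)) := fun b b' h ↦
    hinj <| funext fun i ↦ hG fun g hg ↦ by
      simpa only [heval] using congrFun h (⟨g, hg⟩, i)
  simpa [mul_assoc] using card_le_of_injective_sign L hsign

end PolynomialSignPatterns

theorem exists_le_mul_log_of_two_pow_le (D B : ℕ) :
    ∃ c : ℝ, 0 < c ∧ ∀ K m : ℕ, 2 ≤ K →
      2 ^ m ≤ (D * (m * K) + 1) ^ B → (m : ℝ) ≤ c * Real.log K := by
  have hlog : 0 < Real.log (3 / 2) := Real.log_pos (by norm_num)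
  obtain ⟨M, hM⟩ : ∃ M : ℝ, ∀ n : ℕ, (n : ℝ) ^ B * (3 / 4) ^ n ≤ M := by
    obtain ⟨M, hM⟩ := (tendsto_pow_const_mul_const_pow_of_lt_one B (r := 3 / 4)
      (by norm_num) (by norm_num)).bddAbove_range
    exact ⟨M, fun n ↦ hM ⟨n, rfl⟩⟩
  obtain ⟨N, hN⟩ := pow_unbounded_of_one_lt ((D + 1 : ℝ) ^ B * M) one_lt_two
  refine ⟨(N + B + 1) / Real.log (3 / 2), by positivity, fun K m hK hle ↦ ?_⟩
  have hK' : (2 : ℝ) ≤ K := by exact_mod_cast hK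
  have hlogK : 0 < Real.log K := Real.log_pos (by linarith)
  rcases m.eq_zero_or_pos with rfl | hm
  · rw [Nat.cast_zero]
    positivity
  have hbase : D * (m * K) + 1 ≤ (D + 1) * K * m := by nlinarith [Nat.mul_pos hm (by lia : 0 < K)]
  have hpow : ((3 : ℝ) / 2) ^ m ≤ K ^ (N + B + 1) :=
    calc ((3 : ℝ) / 2) ^ m = 2 ^ m * (3 / 4) ^ m := by rw [← mul_pow]; norm_num
      _ ≤ ((D + 1) * K * m) ^ B * (3 / 4) ^ m := by
        gcongr
        exact_mod_cast hle.trans (Nat.pow_le_pow_left hbase B)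
      _ = (D + 1) ^ B * (m ^ B * (3 / 4) ^ m) * K ^ B := by rw [mul_pow, mul_pow]; ring
      _ ≤ (D + 1) ^ B * M * K ^ B := by gcongr; exact hM m
      _ ≤ 2 ^ N * K ^ B := by gcongr
      _ ≤ K ^ N * K ^ B := by gcongr
      _ ≤ K ^ (N + B + 1) := by
        rw [← pow_add]
        exact pow_le_pow_right₀ (by linarith) (Nat.le_succ _)
  have hlogpow := Real.log_le_log (by positivity) hpow
  rw [Real.log_pow, Real.log_pow] at hlogpow
  rw [div_mul_eq_mul_div, le_div_iff₀ hlog]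
  exact_mod_cast hlogpow

section Segments

/-- A rational parametrization of the segment from `x = segmentParam x y (-1)` to
`y = segmentParam x y 1` by the whole real line. -/
noncomputable def segmentParam {E : Type*} [AddCommGroup E] [Module ℝ E] (x y : E) (s : ℝ) : E :=
  ((1 - s) ^ 2 / ((1 - s) ^ 2 + (1 + s) ^ 2)) • x + ((1 + s) ^ 2 / ((1 - s) ^ 2 + (1 + s) ^ 2)) • y

theorem range_segmentParam {E : Type*} [AddCommGroup E] [Module ℝ E] (x y : E) :
    Set.range (segmentParam x y) = segment ℝ x y := by
  ext z
  rw [Set.mem_range, mem_segment_iff_div]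
  constructor
  · rintro ⟨s, rfl⟩
    exact ⟨(1 - s) ^ 2, (1 + s) ^ 2, sq_nonneg _, sq_nonneg _, by nlinarith, rfl⟩
  · rintro ⟨a, b, ha, hb, hab, rfl⟩
    have hsum : 0 < √a + √b := by
      rcases lt_or_lt_of_add_lt_add ((add_zero 0).trans_lt hab) with h | h <;> positivity
    refine ⟨(√b - √a) / (√a + √b), ?_⟩
    have hx : (1 - (√b - √a) / (√a + √b)) ^ 2 = 4 / (√a + √b) ^ 2 * a := by
      field_simp
      linear_combination 4 * Real.sq_sqrt ha
    have hy : (1 + (√b - √a) / (√a + √b)) ^ 2 = 4 / (√a + √b) ^ 2 * b := by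
      field_simp
      linear_combination 4 * Real.sq_sqrt hb
    have hscale : 4 / (√a + √b) ^ 2 ≠ 0 := by positivity
    rw [segmentParam, hx, hy, ← mul_add, mul_div_mul_left _ _ hscale, mul_div_mul_left _ _ hscale]

theorem IsAxisSegment.exists_eq_segment {p : ℕ} {s : Set (Fin p → ℝ)} (hs : IsAxisSegment p s) :
    ∃ x y, s = segment ℝ x y := by
  obtain ⟨x, i, ℓ, hℓ, rfl⟩ := hs
  let line : ℝ →ᵃ[ℝ] Fin p → ℝ := AffineMap.lineMap x (x + Pi.single i 1)
  refine ⟨line 0, line ℓ, ?_⟩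
  rw [← image_segment, segment_eq_Icc hℓ]
  ext y
  simp [line, AffineMap.lineMap_apply, eq_comm, add_comm]

end Segments

section GenericRestriction

open Polynomial
open MvPolynomial (eval eval₂Hom)

variable {σ : Type*} [Finite σ]

theorem sum_degree_le_eq_pow_mul_eval_div {𝕜 : Type*} [Field 𝕜] {d : ℕ} {f : MvPolynomial σ 𝕜}
    (hf : f.totalDegree ≤ d) {w : 𝕜} (hw : w ≠ 0) (u : σ → 𝕜) :
    ∑ e ∈ (Finsupp.finite_of_degree_le d).toFinset,
        f.coeff e * (w ^ (d - e.degree) * e.prod fun i k ↦ u i ^ k) =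
      w ^ d * eval (fun i ↦ u i / w) f := by
  have hsub : f.support ⊆ (Finsupp.finite_of_degree_le d).toFinset := fun e he ↦
    (Finsupp.finite_of_degree_le d).mem_toFinset.2 ((MvPolynomial.le_totalDegree he).trans hf)
  rw [MvPolynomial.eval_eq, Finset.sum_subset hsub fun e _ he ↦ by
    rw [MvPolynomial.notMem_support_iff.1 he, zero_mul], Finset.mul_sum]
  refine Finset.sum_congr rfl fun e he ↦ ?_
  have hw_pow : w ^ d = w ^ (d - e.degree) * ∏ i ∈ e.support, w ^ e i := by
    rw [Finset.prod_pow_eq_pow_sum, ← Finsupp.degree_apply, ← pow_add,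
      Nat.sub_add_cancel ((Finsupp.finite_of_degree_le d).mem_toFinset.1 he)]
  simp only [Finsupp.prod, div_pow, Finset.prod_div_distrib, hw_pow]
  field_simp [Finset.prod_ne_zero_iff.2 fun i (_ : i ∈ e.support) ↦ pow_ne_zero (e i) hw]

/-- The restriction of the generic polynomial of degree at most `d` in the variables `σ`, whose
coefficient at the monomial `e` is `X e`, to the segment between two generic points, with
coordinates `X (inl i)` and `X (inr i)`. The segment is parametrized as in
`segmentParam`, with denominators cleared. -/
noncomputable def genericRestriction (σ : Type*) [Finite σ] (d : ℕ) :
    (MvPolynomial (σ ⊕ σ) (MvPolynomial (σ →₀ ℕ) ℝ))[X] :=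
  ∑ e ∈ (Finsupp.finite_of_degree_le d).toFinset,
    C (MvPolynomial.C (MvPolynomial.X e)) * (((1 - X) ^ 2 + (1 + X) ^ 2) ^ (d - e.degree) *
      e.prod fun i k ↦ ((1 - X) ^ 2 * C (MvPolynomial.X (.inl i)) +
        (1 + X) ^ 2 * C (MvPolynomial.X (.inr i))) ^ k)

theorem eval_map_genericRestriction {d : ℕ} {f : MvPolynomial σ ℝ} (hf : f.totalDegree ≤ d)
    (x y : σ → ℝ) (s : ℝ) :
    ((genericRestriction σ d).map
      (eval₂Hom (eval fun e ↦ f.coeff e) (Sum.elim x y))).eval s =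
      ((1 - s) ^ 2 + (1 + s) ^ 2) ^ d * eval (segmentParam x y s) f := by
  have hden : (1 - s) ^ 2 + (1 + s) ^ 2 ≠ 0 := by nlinarith
  have hpoint : segmentParam x y s =
      fun i ↦ ((1 - s) ^ 2 * x i + (1 + s) ^ 2 * y i) / ((1 - s) ^ 2 + (1 + s) ^ 2) := by
    ext i
    simp only [segmentParam, Pi.add_apply, Pi.smul_apply, smul_eq_mul]
    ring
  rw [hpoint, ← sum_degree_le_eq_pow_mul_eval_div hf hden]
  simp [genericRestriction, Finsupp.prod, Polynomial.map_sum, eval_finsetSum, Polynomial.map_prod,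
    eval_prod]

theorem exists_eval_map_genericRestriction_eq_zero {d : ℕ} {f : MvPolynomial σ ℝ}
    (hf : f.totalDegree ≤ d) (x y : σ → ℝ) :
    (∃ s, ((genericRestriction σ d).map
      (eval₂Hom (eval fun e ↦ f.coeff e) (Sum.elim x y))).eval s = 0) ↔
      ({z | eval z f = 0} ∩ segment ℝ x y).Nonempty := by
  have hden : ∀ s : ℝ, ((1 - s) ^ 2 + (1 + s) ^ 2) ^ d ≠ 0 := fun s ↦ pow_ne_zero d (by nlinarith)
  rw [Set.inter_comm, ← range_segmentParam]
  simp [Set.inter_nonempty, eval_map_genericRestriction hf, hden]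

end GenericRestriction

theorem vc_dim_of_segment_labelings_of_tuples_general (σ : Type*) [Finite σ] (d : ℕ) :
    ∃ c : ℝ, 0 < c ∧ ∀ K : ℕ, 2 ≤ K → ∀ m : ℕ,
      ∀ γ : Fin m → Fin K → Set (σ → ℝ),
        (∀ j k, ∃ f : MvPolynomial σ ℝ,
          f.totalDegree ≤ d ∧ γ j k = {x | MvPolynomial.eval x f = 0}) →
        (∀ b : Fin m → Bool, ∃ x y, ∀ j, (∃ k, (γ j k ∩ segment ℝ x y).Nonempty) ↔ b j = true) →
        (m : ℝ) ≤ c * Real.log K := by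
  obtain ⟨D, B, hcard⟩ :=
    (SignDetermined.exists_eval_map_eq_zero (genericRestriction σ d)).exists_card_le_pow
  obtain ⟨c, hc, hlog⟩ := exists_le_mul_log_of_two_pow_le D B
  refine ⟨c, hc, fun K hK m γ hγ hshatter ↦ hlog K m hK ?_⟩
  choose f hf hγf using hγ
  choose x y hxy using hshatter
  have hmeet : ∀ b j k, _ ↔ (γ j k ∩ segment ℝ (x b) (y b)).Nonempty := fun b j k ↦
    hγf j k ▸ exists_eval_map_genericRestriction_eq_zero (hf j k) (x b) (y b)
  have hbound := hcard (Fin m × Fin K) (Fin m → Bool)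
    (fun i ↦ MvPolynomial.eval fun e ↦ (f i.1 i.2).coeff e) (fun b ↦ Sum.elim (x b) (y b))
    fun b b' h ↦ funext fun j ↦ Bool.eq_iff_iff.2 <| by
      rw [← hxy, ← hxy]
      exact exists_congr fun k ↦ by
        rw [← hmeet, ← hmeet]
        exact iff_of_eq (congrFun h (j, k))
  simpa using hbound

/-- The VC dimension of the class `{f_s}` of binary functions indexed by axis-aligned
segments `s`, acting on `K`-tuples of algebraic hypersurfaces of degree at most `d` in
`ℝ^p` by `f_s(γ) = 1` iff some `γ_k` intersects `s`, is at most `c·log K` for a constant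
`c` depending only on `d` and `p`: any VC-shattered collection of `m` tuples has
`m ≤ c·log K`. -/
theorem vc_dim_of_segment_labelings_of_tuples (d p : ℕ) (hd : 0 < d) (hp : 0 < p) :
    ∃ c : ℝ, 0 < c ∧ ∀ K : ℕ, 2 ≤ K → ∀ m : ℕ,
      ∀ γ : Fin m → Fin K → Set (Fin p → ℝ),
        (∀ j k, IsAlgHypersurface d p (γ j k)) →
        (∀ bvec : Fin m → Bool, ∃ s : Set (Fin p → ℝ), IsAxisSegment p s ∧
          ∀ j, ((∃ k, (γ j k ∩ s).Nonempty) ↔ bvec j = true)) →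
        (m : ℝ) ≤ c * Real.log K := by
  obtain ⟨c, hc, hmain⟩ := vc_dim_of_segment_labelings_of_tuples_general (Fin p) d
  refine ⟨c, hc, fun K hK m γ hγ hshatter ↦ hmain K hK m γ (fun j k ↦ ?_) fun b ↦ ?_⟩
  · obtain ⟨f, -, hf⟩ := hγ j k
    exact ⟨f, hf⟩
  · obtain ⟨s, hs, hlabel⟩ := hshatter b
    obtain ⟨x, y, rfl⟩ := hs.exists_eq_segment
    exact ⟨x, y, hlabel⟩
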